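/- arXiv:math/0702573 — 2 statements merged into one kernel-verified Lean document; each statement's English description precedes it below -/
import Mathlib

section
/- Fix n ≥ 1 and times 0 < T_1 < … < T_n with k_{j-1}(T_j,T_j) > 0 for j = 1,…,n. Then k_n(s,T_n) = 0 for every s ≥ 0, and under Assumptions A and GD, k_n(T_n+εt,T_n+εs)/γ_ε² converges, uniformly for (t,s) ∈ [0,1]² as ε → 0⁺, to k̄_n(t,s) = k̄(t,s) − Σ_{ℓ=1}^{n} k_{ℓ-1}(T_ℓ,T_ℓ) ᾱ_ℓ(t) ᾱ_ℓ(s). -/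
open MeasureTheory Filter Topology Set

noncomputable def condCov (k : ℝ → ℝ → ℝ) (T : ℕ → ℝ) : ℕ → ℝ → ℝ → ℝ
  | 0 => k
  | j + 1 => fun t s =>
      condCov k T j t s -
        condCov k T j t (T (j + 1)) / condCov k T j (T (j + 1)) (T (j + 1)) *
          condCov k T j s (T (j + 1))

noncomputable def condRec (k : ℝ → ℝ → ℝ) (T : ℕ → ℝ) (f : ℝ → ℝ → ℝ) : ℕ → ℝ → ℝ → ℝ
  | 0 => f
  | j + 1 => fun t S =>
      condRec k T f j t S -
        condCov k T j S (T (j + 1)) / condCov k T j (T (j + 1)) (T (j + 1)) *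
          condRec k T f j t (T (j + 1))

noncomputable def kbarN (k : ℝ → ℝ → ℝ) (T : ℕ → ℝ) (ρ : ℝ → ℝ → ℝ) (kbar : ℝ → ℝ → ℝ)
    (n : ℕ) (t s : ℝ) : ℝ :=
  kbar t s - ∑ ℓ ∈ Finset.range n, condCov k T ℓ (T (ℓ + 1)) (T (ℓ + 1)) *
    (condRec k T ρ ℓ t (T (ℓ + 1)) / condCov k T ℓ (T (ℓ + 1)) (T (ℓ + 1))) *
    (condRec k T ρ ℓ s (T (ℓ + 1)) / condCov k T ℓ (T (ℓ + 1)) (T (ℓ + 1)))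

theorem condCov_symm {k : ℝ → ℝ → ℝ} (hk : ∀ t s, k t s = k s t) (T : ℕ → ℝ) (j : ℕ) (t s : ℝ) :
    condCov k T j t s = condCov k T j s t := by
  induction j generalizing t s with
  | zero => exact hk t s
  | succ j ih =>
    simp only [condCov]
    rw [ih t s]
    ring

theorem condCov_succ_self (k : ℝ → ℝ → ℝ) (T : ℕ → ℝ) (j : ℕ)
    (h : condCov k T j (T (j + 1)) (T (j + 1)) ≠ 0) (s : ℝ) :
    condCov k T (j + 1) s (T (j + 1)) = 0 := by
  simp only [condCov]
  rw [div_mul_cancel₀ _ h, sub_self]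

theorem TendstoUniformlyOn.const_mul_real {ι α : Type*} {F : ι → α → ℝ} {f : α → ℝ} {l : Filter ι}
    {s : Set α} (h : TendstoUniformlyOn F f l s) (c : ℝ) :
    TendstoUniformlyOn (fun i x => c * F i x) (fun x => c * f x) l s :=
  (uniformContinuous_const_smul c).comp_tendstoUniformlyOn h

/-- Conditioning preserves the uniform convergence of normalized increments. -/
theorem tendstoUniformlyOn_condCov_increment {k : ℝ → ℝ → ℝ} {T : ℕ → ℝ} {ρ : ℝ → ℝ → ℝ}
    {γ : ℝ → ℝ} {l : Filter ℝ} {A : Set ℝ} {x : ℝ}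
    (hρ : ∀ S, 0 < S → TendstoUniformlyOn (fun ε t => (k (x + ε * t) S - k x S) / γ ε)
      (fun t => ρ t S) l A)
    (j : ℕ) (hT : ∀ i < j, 0 < T (i + 1)) (S : ℝ) (hS : 0 < S) :
    TendstoUniformlyOn
      (fun ε t => (condCov k T j (x + ε * t) S - condCov k T j x S) / γ ε)
      (fun t => condRec k T ρ j t S) l A := by
  induction j generalizing S with
  | zero => exact hρ S hS
  | succ j ih =>
    have ih' := ih fun i hi => hT i (hi.trans (Nat.lt_succ_self j))
    refine ((ih' S hS).fun_sub ((ih' (T (j + 1)) (hT j (Nat.lt_succ_self j))).const_mul_real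
      (condCov k T j S (T (j + 1)) / condCov k T j (T (j + 1)) (T (j + 1))))).congr
      (Eventually.of_forall fun ε t _ => ?_)
    simp only [condCov]
    ring

theorem continuousOn_condRec {k : ℝ → ℝ → ℝ} {T : ℕ → ℝ} {ρ : ℝ → ℝ → ℝ} {A : Set ℝ}
    (hρ : ∀ S, 0 < S → ContinuousOn (fun t => ρ t S) A)
    (j : ℕ) (hT : ∀ i < j, 0 < T (i + 1)) (S : ℝ) (hS : 0 < S) :
    ContinuousOn (fun t => condRec k T ρ j t S) A := by
  induction j generalizing S with
  | zero => exact hρ S hS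
  | succ j ih =>
    have ih' := ih fun i hi => hT i (hi.trans (Nat.lt_succ_self j))
    exact (ih' S hS).sub (continuousOn_const.mul (ih' (T (j + 1)) (hT j (Nat.lt_succ_self j))))

/-- Conditioning preserves the uniform convergence of normalized second-order increments. -/
theorem tendstoUniformlyOn_condCov_rectangle {k : ℝ → ℝ → ℝ}
    {T : ℕ → ℝ} {ρ kbar : ℝ → ℝ → ℝ} {γ : ℝ → ℝ} {l : Filter ℝ} {A : Set ℝ} (hA : IsCompact A)
    {x : ℝ}
    (hρ : ∀ S, 0 < S → TendstoUniformlyOn (fun ε t => (k (x + ε * t) S - k x S) / γ ε)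
      (fun t => ρ t S) l A)
    (hρc : ∀ S, 0 < S → ContinuousOn (fun t => ρ t S) A)
    (hkbar : TendstoUniformlyOn
      (fun ε (p : ℝ × ℝ) => (k (x + ε * p.1) (x + ε * p.2) - k (x + ε * p.1) x -
        k x (x + ε * p.2) + k x x) / (γ ε) ^ 2)
      (fun p => kbar p.1 p.2) l (A ×ˢ A))
    (j : ℕ) (hT : ∀ i < j, 0 < T (i + 1))
    (hne : ∀ i < j, condCov k T i (T (i + 1)) (T (i + 1)) ≠ 0) :
    TendstoUniformlyOn
      (fun ε (p : ℝ × ℝ) => (condCov k T j (x + ε * p.1) (x + ε * p.2) -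
        condCov k T j (x + ε * p.1) x - condCov k T j x (x + ε * p.2) + condCov k T j x x) /
          (γ ε) ^ 2)
      (fun p => kbarN k T ρ kbar j p.1 p.2) l (A ×ˢ A) := by
  induction j with
  | zero => simpa [condCov, kbarN] using hkbar
  | succ j ih =>
    have hTj := hT j (Nat.lt_succ_self j)
    have hnej := hne j (Nat.lt_succ_self j)
    have hT' : ∀ i < j, 0 < T (i + 1) := fun i hi => hT i (hi.trans (Nat.lt_succ_self j))
    have hinc := tendstoUniformlyOn_condCov_increment hρ j hT' _ hTj
    have hcont := continuousOn_condRec (k := k) hρc j hT' _ hTj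
    have hinc₁ := (hinc.comp Prod.fst).mono (fun p (hp : p ∈ A ×ˢ A) => hp.1)
    have hinc₂ := (hinc.comp Prod.snd).mono (fun p (hp : p ∈ A ×ˢ A) => hp.2)
    have hprod := (tendstoLocallyUniformlyOn_iff_tendstoUniformlyOn_of_compact (hA.prod hA)).1
      (hinc₁.tendstoLocallyUniformlyOn.mul₀ hinc₂.tendstoLocallyUniformlyOn
        (hcont.comp continuousOn_fst fun p hp => hp.1)
        (hcont.comp continuousOn_snd fun p hp => hp.2))
    refine (((ih hT' fun i hi => hne i (hi.trans (Nat.lt_succ_self j))).fun_sub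
      (hprod.const_mul_real (condCov k T j (T (j + 1)) (T (j + 1)))⁻¹)).congr
      (Eventually.of_forall fun ε p _ => ?_)).congr_right fun p _ => ?_
    · simp only [condCov, Pi.mul_apply, Function.comp_apply]
      ring
    · simp only [kbarN, Finset.sum_range_succ, Pi.mul_apply, Function.comp_apply]
      field_simp
      ring

/-- The `n`-fold conditional covariance `k_n` vanishes at `T_n`; moreover, under
Assumptions A and GD, `k_n(T_n+εt, T_n+εs)/γ_ε²` converges uniformly on `[0,1]²` to
`k̄_n(t,s) = k̄(t,s) − Σ_{ℓ=1}^{n} k_{ℓ-1}(T_ℓ,T_ℓ) ᾱ_ℓ(t) ᾱ_ℓ(s) = kbarN k T ρ kbar n t s`. -/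
theorem conditional_covariance_asymptotics
    (k : ℝ → ℝ → ℝ) (T : ℕ → ℝ) (n : ℕ)
    (hn : 1 ≤ n)
    (hkcont : ContinuousOn (fun p : ℝ × ℝ => k p.1 p.2) (Ici 0 ×ˢ Ici 0))
    (hksymm : ∀ t s, k t s = k s t)
    (hT1 : 0 < T 1)
    (hTmono : ∀ j, 1 ≤ j → j + 1 ≤ n → T j < T (j + 1))
    (hpos : ∀ j < n, 0 < condCov k T j (T (j + 1)) (T (j + 1))) :
    (∀ s : ℝ, 0 ≤ s → condCov k T n s (T n) = 0) ∧
    (∀ γ : ℝ → ℝ, ∀ ρ kbar : ℝ → ℝ → ℝ,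
      (∀ ε : ℝ, 0 < ε → 0 < γ ε) →
      Tendsto γ (𝓝[>] (0:ℝ)) (𝓝 0) →
      (∀ T' : ℝ, 0 < T' → TendstoUniformlyOn
        (fun ε t => (k (T n + ε * t) T' - k (T n) T') / γ ε)
        (fun t => ρ t T') (𝓝[>] (0:ℝ)) (Icc 0 1)) →
      TendstoUniformlyOn
        (fun ε (p : ℝ × ℝ) =>
          (k (T n + ε * p.1) (T n + ε * p.2) - k (T n + ε * p.1) (T n) -
            k (T n) (T n + ε * p.2) + k (T n) (T n)) / (γ ε) ^ 2)
        (fun p => kbar p.1 p.2) (𝓝[>] (0:ℝ)) (Icc 0 1 ×ˢ Icc 0 1) →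
      TendstoUniformlyOn
        (fun ε (p : ℝ × ℝ) =>
          condCov k T n (T n + ε * p.1) (T n + ε * p.2) / (γ ε) ^ 2)
        (fun p => kbarN k T ρ kbar n p.1 p.2) (𝓝[>] (0:ℝ)) (Icc 0 1 ×ˢ Icc 0 1)) := by
  have hTpos : ∀ i < n, 0 < T (i + 1) := by
    intro i
    induction i with
    | zero => exact fun _ => hT1
    | succ i ih =>
      exact fun hi => (ih (by omega)).trans (hTmono (i + 1) (by omega) (by omega))
  obtain ⟨m, rfl⟩ : ∃ m, n = m + 1 := ⟨n - 1, by omega⟩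
  have hzero := condCov_succ_self k T m (hpos m (Nat.lt_succ_self m)).ne'
  refine ⟨fun s _ => hzero s, fun γ ρ kbar _ _ hρ hkbar => ?_⟩
  have hTm := hTpos m (Nat.lt_succ_self m)
  have hρc : ∀ S, 0 < S → ContinuousOn (fun t => ρ t S) (Icc 0 1) := by
    intro S hS
    refine (hρ S hS).continuousOn (Eventually.frequently ?_)
    filter_upwards [self_mem_nhdsWithin] with ε hε
    refine ((hkcont.comp (f := fun t : ℝ => (T (m + 1) + ε * t, S)) (by fun_prop) ?_).sub
      continuousOn_const).div_const _
    intro t ht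
    exact ⟨add_nonneg hTm.le (mul_nonneg (le_of_lt hε) ht.1), hS.le⟩
  refine (tendstoUniformlyOn_condCov_rectangle isCompact_Icc hρ hρc hkbar (m + 1) hTpos
    fun i hi => (hpos i hi).ne').congr (Eventually.of_forall fun ε p _ => ?_)
  simp only [hzero, condCov_symm hksymm T (m + 1) (T (m + 1)), sub_zero, add_zero]
end

section
/- Let κ : [0,∞)×[0,∞) → ℝ be continuous, k(t,s) = ∫_0^t ∫_0^s κ(u,v) du dv, fix T_n > 0 and α ∈ (0,1]. Suppose: (i) there is ĝ ∈ L¹([0,1]²) such that ‖κ(T_n+ε·, T_n+ε·) − κ(T_n,T_n) − ε^α ĝ‖_{L¹([0,1]²)} = o(ε^α) as ε → 0⁺; and (ii) for every T > 0 there is g̃(·;T) ∈ L¹([0,1]) such that ‖∫_0^T κ(T_n+ε·, v) dv − ∫_0^T κ(T_n,v) dv − ε^α g̃(·;T)‖_{L¹([0,1])} = o(ε^α) as ε → 0⁺. Then, with φ̄(t,s) = ∫_0^t ∫_0^s ĝ(u,v) du dv and ψ̄(t;T) = ∫_0^t g̃(u;T) du: (a) k(T_n+εt,T_n+εs) − k(T_n+εt,T_n)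 − k(T_n,T_n+εs) + k(T_n,T_n) = ε²[κ(T_n,T_n)·ts + φ̄(t,s)ε^α + R¹_ε(t,s)] with sup_{t,s∈[0,1]} |R¹_ε(t,s)|/ε^α → 0; and (b) for every T > 0, k(T_n+εt,T) − k(T_n,T) = ε[(∫_0^T κ(T_n,v)dv)·t + ψ̄(t;T)ε^α + R²_ε(t;T)] with sup_{t∈[0,1]} |R²_ε(t;T)|/ε^α → 0. That is, Assumption R1 holds with a² = κ(T_n,T_n) and c(T) = ∫_0^T κ(T_n,v)dv. -/
open MeasureTheory Filter Topology Set

/-- The covariance function `k(t,s) = ∫_0^t ∫_0^s κ(u,v) dv du` of the integrated Gaussian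
process `X_t = ∫_0^t Z_u du`, where `κ` is the covariance of `Z`. -/
noncomputable def intCov (κ : ℝ → ℝ → ℝ) (t s : ℝ) : ℝ :=
  ∫ u in (0:ℝ)..t, ∫ v in (0:ℝ)..s, κ u v

/-- A family dominated on `s` by a function tending to `0` tends to `0` uniformly on `s`. -/
lemma tendstoUniformlyOn_zero_of_abs_le {ι β : Type*} {l : Filter ι} {F : ι → β → ℝ} {s : Set β}
    {G : ι → ℝ} (hG : Tendsto G l (𝓝 0)) (h : ∀ᶠ i in l, ∀ x ∈ s, |F i x| ≤ G i) :
    TendstoUniformlyOn F (fun _ => 0) l s := by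
  rw [Metric.tendstoUniformlyOn_iff]
  intro δ hδ
  filter_upwards [h, hG.eventually (gt_mem_nhds hδ)] with i hi hGi x hx
  rw [dist_comm, Real.dist_eq, sub_zero]
  exact (hi x hx).trans_lt hGi

lemma abs_setIntegral_le_setIntegral_abs {β : Type*} [MeasurableSpace β] {μ : Measure β}
    {f : β → ℝ} {s t : Set β} (hf : IntegrableOn f t μ) (hst : s ⊆ t) :
    |∫ x in s, f x ∂μ| ≤ ∫ x in t, |f x| ∂μ :=
  abs_integral_le_integral_abs.trans
    (setIntegral_mono_set hf.abs (ae_of_all _ fun _ => abs_nonneg _) hst.eventuallyLE)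

lemma intervalIntegral_intervalIntegral_eq_setIntegral_prod {f : ℝ × ℝ → ℝ} {t s : ℝ}
    (ht : 0 ≤ t) (hs : 0 ≤ s) (hf : IntegrableOn f (Ioc 0 t ×ˢ Ioc 0 s)) :
    ∫ u in (0:ℝ)..t, ∫ v in (0:ℝ)..s, f (u, v) = ∫ p in Ioc 0 t ×ˢ Ioc 0 s, f p := by
  rw [Measure.volume_eq_prod] at hf ⊢
  rw [setIntegral_prod f hf, intervalIntegral.integral_of_le ht]
  simp only [intervalIntegral.integral_of_le hs]

section IntCov

variable {κ : ℝ → ℝ → ℝ}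

lemma continuous_intervalIntegral_right (hκ : Continuous (Function.uncurry κ)) (a b : ℝ) :
    Continuous fun u => ∫ v in a..b, κ u v :=
  intervalIntegral.continuous_parametric_intervalIntegral_of_continuous' hκ a b

lemma intCov_sub_left (hκ : Continuous (Function.uncurry κ)) (x ε t T : ℝ) :
    intCov κ (x + ε * t) T - intCov κ x T =
      ε * ∫ u in (0:ℝ)..t, ∫ v in (0:ℝ)..T, κ (x + ε * u) v := by
  have hc := continuous_intervalIntegral_right hκ 0 T
  rw [intCov, intCov, intervalIntegral.integral_interval_sub_left
    (hc.intervalIntegrable _ _) (hc.intervalIntegrable _ _),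
    intervalIntegral.mul_integral_comp_add_mul (f := fun u => ∫ v in (0:ℝ)..T, κ u v)]
  simp

lemma intCov_second_difference (hκ : Continuous (Function.uncurry κ)) (x ε t s : ℝ) :
    intCov κ (x + ε * t) (x + ε * s) - intCov κ (x + ε * t) x - intCov κ x (x + ε * s)
        + intCov κ x x =
      ε ^ 2 * ∫ u in (0:ℝ)..t, ∫ v in (0:ℝ)..s, κ (x + ε * u) (x + ε * v) := by
  have hshift : Continuous fun u => x + ε * u := by fun_prop
  have hint : ∀ T, IntervalIntegrable (fun u => ∫ v in (0:ℝ)..T, κ (x + ε * u) v) volume 0 t :=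
    fun T => ((continuous_intervalIntegral_right hκ 0 T).comp hshift).intervalIntegrable _ _
  have hv : ∀ u a b, IntervalIntegrable (fun v => κ u v) volume a b :=
    fun u a b => (hκ.uncurry_left u).intervalIntegrable _ _
  calc _ = (intCov κ (x + ε * t) (x + ε * s) - intCov κ x (x + ε * s))
        - (intCov κ (x + ε * t) x - intCov κ x x) := by ring
    _ = ε * ∫ u in (0:ℝ)..t, ε * ∫ v in (0:ℝ)..s, κ (x + ε * u) (x + ε * v) := by
      rw [intCov_sub_left hκ, intCov_sub_left hκ, ← mul_sub,
        ← intervalIntegral.integral_sub (hint _) (hint _)]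
      congr 1
      refine intervalIntegral.integral_congr fun u _ => ?_
      rw [intervalIntegral.integral_interval_sub_left (hv _ _ _) (hv _ _ _),
        intervalIntegral.mul_integral_comp_add_mul (f := fun v => κ (x + ε * u) v)]
      simp
    _ = _ := by rw [intervalIntegral.integral_const_mul]; ring

lemma intCov_congr {κ' : ℝ → ℝ → ℝ} (h : ∀ u v, 0 ≤ u → 0 ≤ v → κ u v = κ' u v) {t s : ℝ}
    (ht : 0 ≤ t) (hs : 0 ≤ s) : intCov κ t s = intCov κ' t s := by
  refine intervalIntegral.integral_congr fun u hu => ?_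
  refine intervalIntegral.integral_congr fun v hv => ?_
  rw [uIcc_of_le ht] at hu
  rw [uIcc_of_le hs] at hv
  exact h u v hu.1 hv.1

lemma intCov_second_difference_remainder_le (hκ : Continuous (Function.uncurry κ))
    {g : ℝ × ℝ → ℝ} (hg : IntegrableOn g (Icc 0 1 ×ˢ Icc 0 1)) (x c : ℝ) {ε r t s : ℝ}
    (hε : 0 < ε) (hr : 0 < r) (ht : t ∈ Icc (0:ℝ) 1) (hs : s ∈ Icc (0:ℝ) 1) :
    |((intCov κ (x + ε * t) (x + ε * s) - intCov κ (x + ε * t) x - intCov κ x (x + ε * s)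
          + intCov κ x x) / ε ^ 2 - c * (t * s)
        - (∫ u in (0:ℝ)..t, ∫ v in (0:ℝ)..s, g (u, v)) * r) / r| ≤
      (∫ p in Icc (0:ℝ) 1 ×ˢ Icc (0:ℝ) 1,
        |κ (x + ε * p.1) (x + ε * p.2) - c - r * g p|) / r := by
  have hsub : Ioc 0 t ×ˢ Ioc 0 s ⊆ Icc (0:ℝ) 1 ×ˢ Icc (0:ℝ) 1 :=
    prod_mono (Ioc_subset_Icc_self.trans (Icc_subset_Icc_right ht.2))
      (Ioc_subset_Icc_self.trans (Icc_subset_Icc_right hs.2))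
  have hcomp : IsCompact (Icc (0:ℝ) 1 ×ˢ Icc (0:ℝ) 1) := isCompact_Icc.prod isCompact_Icc
  have hcont : Continuous fun p : ℝ × ℝ => κ (x + ε * p.1) (x + ε * p.2) :=
    hκ.comp (by fun_prop : Continuous fun p : ℝ × ℝ => (x + ε * p.1, x + ε * p.2))
  have hK := hcont.continuousOn.integrableOn_compact (μ := volume) hcomp
  have hC := (continuous_const (y := c)).continuousOn.integrableOn_compact (μ := volume) hcomp
  have hKC : IntegrableOn (fun p : ℝ × ℝ => κ (x + ε * p.1) (x + ε * p.2) - c)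
      (Icc (0:ℝ) 1 ×ˢ Icc (0:ℝ) 1) := hK.sub hC
  have hrem : IntegrableOn (fun p : ℝ × ℝ => κ (x + ε * p.1) (x + ε * p.2) - c - r * g p)
      (Icc (0:ℝ) 1 ×ˢ Icc (0:ℝ) 1) := hKC.sub (hg.const_mul r)
  have hvol : ∫ _ in Ioc 0 t ×ˢ Ioc 0 s, c = c * (t * s) := by
    rw [← intervalIntegral_intervalIntegral_eq_setIntegral_prod ht.1 hs.1 (hC.mono_set hsub)]
    simp only [intervalIntegral.integral_const, smul_eq_mul, sub_zero]
    ring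
  have hmain : (∫ p in Ioc 0 t ×ˢ Ioc 0 s, (κ (x + ε * p.1) (x + ε * p.2) - c - r * g p)) =
      (∫ u in (0:ℝ)..t, ∫ v in (0:ℝ)..s, κ (x + ε * u) (x + ε * v)) - c * (t * s)
        - (∫ u in (0:ℝ)..t, ∫ v in (0:ℝ)..s, g (u, v)) * r := by
    rw [integral_sub (hKC.mono_set hsub) ((hg.mono_set hsub).const_mul r),
      integral_sub (hK.mono_set hsub) (hC.mono_set hsub), integral_const_mul, hvol,
      intervalIntegral_intervalIntegral_eq_setIntegral_prod ht.1 hs.1 (hg.mono_set hsub),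
      ← intervalIntegral_intervalIntegral_eq_setIntegral_prod ht.1 hs.1 (hK.mono_set hsub),
      mul_comm r]
  rw [intCov_second_difference hκ, mul_div_cancel_left₀ _ (pow_ne_zero 2 hε.ne'), ← hmain,
    abs_div, abs_of_pos hr]
  gcongr
  exact abs_setIntegral_le_setIntegral_abs hrem hsub

lemma intCov_difference_remainder_le (hκ : Continuous (Function.uncurry κ))
    {g : ℝ → ℝ} (hg : IntegrableOn g (Icc 0 1)) (x c T : ℝ) {ε r t : ℝ}
    (hε : 0 < ε) (hr : 0 < r) (ht : t ∈ Icc (0:ℝ) 1) :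
    |((intCov κ (x + ε * t) T - intCov κ x T) / ε - c * t - (∫ u in (0:ℝ)..t, g u) * r) / r| ≤
      (∫ u in Icc (0:ℝ) 1, |(∫ v in (0:ℝ)..T, κ (x + ε * u) v) - c - r * g u|) / r := by
  have hsub : Ioc 0 t ⊆ Icc (0:ℝ) 1 :=
    Ioc_subset_Icc_self.trans (Icc_subset_Icc_right ht.2)
  have hcont : Continuous fun u => ∫ v in (0:ℝ)..T, κ (x + ε * u) v :=
    (continuous_intervalIntegral_right hκ 0 T).comp (by fun_prop : Continuous fun u => x + ε * u)
  have hK := hcont.continuousOn.integrableOn_compact (μ := volume) (isCompact_Icc (a := 0) (b := 1))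
  have hC := (continuous_const (y := c)).continuousOn.integrableOn_compact (μ := volume)
    (isCompact_Icc (a := (0:ℝ)) (b := 1))
  have hKC : IntegrableOn (fun u => (∫ v in (0:ℝ)..T, κ (x + ε * u) v) - c)
      (Icc (0:ℝ) 1) := hK.sub hC
  have hrem : IntegrableOn (fun u => (∫ v in (0:ℝ)..T, κ (x + ε * u) v) - c - r * g u)
      (Icc (0:ℝ) 1) := hKC.sub (hg.const_mul r)
  have hmain : (∫ u in Ioc 0 t, ((∫ v in (0:ℝ)..T, κ (x + ε * u) v) - c - r * g u)) =
      (∫ u in (0:ℝ)..t, ∫ v in (0:ℝ)..T, κ (x + ε * u) v) - c * t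
        - (∫ u in (0:ℝ)..t, g u) * r := by
    rw [integral_sub (hKC.mono_set hsub) ((hg.mono_set hsub).const_mul r),
      integral_sub (hK.mono_set hsub) (hC.mono_set hsub), integral_const_mul,
      ← intervalIntegral.integral_of_le ht.1, ← intervalIntegral.integral_of_le ht.1,
      ← intervalIntegral.integral_of_le ht.1, intervalIntegral.integral_const, smul_eq_mul]
    ring
  rw [intCov_sub_left hκ, mul_div_cancel_left₀ _ hε.ne', ← hmain, abs_div, abs_of_pos hr]
  gcongr
  exact abs_setIntegral_le_setIntegral_abs hrem hsub

end IntCov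

/-- Part 1 of Proposition 4.10: if `κ(T_n+εu,T_n+εv) = κ(T_n,T_n) + ε^α ĝ(u,v) + o_{L¹}(ε^α)`
and `∫_0^T κ(T_n+εu,v)dv = ∫_0^T κ(T_n,v)dv + ε^α g̃(u;T) + o_{L¹}(ε^α)`, then
Assumption R1 holds for `k = intCov κ`, with `a² = κ(T_n,T_n)`, `c(T) = ∫_0^T κ(T_n,v)dv`,
`φ̄(t,s) = ∫_0^t∫_0^s ĝ` and `ψ̄(t;T) = ∫_0^t g̃(u;T)du`; the remainders, divided by `ε^α`,
tend to `0` uniformly. -/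
theorem integrated_refined_expansion_R1
    (κ : ℝ → ℝ → ℝ) (Tn α : ℝ) (ghat : ℝ × ℝ → ℝ) (gtilde : ℝ → ℝ → ℝ)
    (hκ : ContinuousOn (fun p : ℝ × ℝ => κ p.1 p.2) (Ici 0 ×ˢ Ici 0))
    (hTn : 0 < Tn) (hα : α ∈ Ioc (0:ℝ) 1)
    (hghat : IntegrableOn ghat (Icc 0 1 ×ˢ Icc 0 1) volume)
    (hghat_lim : Tendsto
      (fun ε => (∫ p in (Icc (0:ℝ) 1 ×ˢ Icc (0:ℝ) 1),
        |κ (Tn + ε * p.1) (Tn + ε * p.2) - κ Tn Tn - ε ^ α * ghat p|) / ε ^ α)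
      (𝓝[>] (0:ℝ)) (𝓝 0))
    (hgtilde : ∀ T : ℝ, 0 < T → IntegrableOn (fun u => gtilde u T) (Icc 0 1) volume)
    (hgtilde_lim : ∀ T : ℝ, 0 < T → Tendsto
      (fun ε => (∫ u in Icc (0:ℝ) 1,
        |(∫ v in (0:ℝ)..T, κ (Tn + ε * u) v) - (∫ v in (0:ℝ)..T, κ Tn v) -
          ε ^ α * gtilde u T|) / ε ^ α)
      (𝓝[>] (0:ℝ)) (𝓝 0)) :
    (TendstoUniformlyOn
      (fun ε (p : ℝ × ℝ) =>
        ((intCov κ (Tn + ε * p.1) (Tn + ε * p.2) - intCov κ (Tn + ε * p.1) Tn -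
            intCov κ Tn (Tn + ε * p.2) + intCov κ Tn Tn) / ε ^ 2 -
          κ Tn Tn * (p.1 * p.2) -
          (∫ u in (0:ℝ)..p.1, ∫ v in (0:ℝ)..p.2, ghat (u, v)) * ε ^ α) / ε ^ α)
      (fun _ => 0) (𝓝[>] (0:ℝ)) (Icc 0 1 ×ˢ Icc 0 1)) ∧
    (∀ T : ℝ, 0 < T → TendstoUniformlyOn
      (fun ε t =>
        ((intCov κ (Tn + ε * t) T - intCov κ Tn T) / ε -
          (∫ v in (0:ℝ)..T, κ Tn v) * t -
          (∫ u in (0:ℝ)..t, gtilde u T) * ε ^ α) / ε ^ α)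
      (fun _ => 0) (𝓝[>] (0:ℝ)) (Icc 0 1)) := by
  obtain ⟨κ', hκ', heq⟩ : ∃ κ' : ℝ → ℝ → ℝ, Continuous (Function.uncurry κ') ∧
      ∀ u v, 0 ≤ u → 0 ≤ v → κ u v = κ' u v := by
    refine ⟨fun u v => κ (max u 0) (max v 0), ?_, fun u v hu hv => by
      simp only [max_eq_left hu, max_eq_left hv]⟩
    exact hκ.comp_continuous
      (by fun_prop : Continuous fun p : ℝ × ℝ => (max p.1 0, max p.2 0))
      fun p => mk_mem_prod (le_max_right p.1 0) (le_max_right p.2 0)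
  have hnonneg : ∀ {ε u : ℝ}, 0 < ε → u ∈ Icc (0:ℝ) 1 → 0 ≤ Tn + ε * u :=
    fun hε hu => add_nonneg hTn.le (mul_nonneg hε.le hu.1)
  refine ⟨tendstoUniformlyOn_zero_of_abs_le hghat_lim ?_, fun T hT =>
    tendstoUniformlyOn_zero_of_abs_le (hgtilde_lim T hT) ?_⟩
  · filter_upwards [self_mem_nhdsWithin] with ε hε p hp
    have hε : 0 < ε := hε
    rw [intCov_congr heq (hnonneg hε hp.1) (hnonneg hε hp.2),
      intCov_congr heq (hnonneg hε hp.1) hTn.le, intCov_congr heq hTn.le (hnonneg hε hp.2),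
      intCov_congr heq hTn.le hTn.le,
      setIntegral_congr_fun (g := fun q : ℝ × ℝ =>
        |κ' (Tn + ε * q.1) (Tn + ε * q.2) - κ Tn Tn - ε ^ α * ghat q|)
        (measurableSet_Icc.prod measurableSet_Icc) fun q hq => by
          simp only [heq _ _ (hnonneg hε hq.1) (hnonneg hε hq.2)]]
    exact intCov_second_difference_remainder_le hκ' hghat Tn _ hε (Real.rpow_pos_of_pos hε α)
      hp.1 hp.2
  · filter_upwards [self_mem_nhdsWithin] with ε hε t ht
    have hε : 0 < ε := hε
    have hinner : ∀ {x : ℝ}, 0 ≤ x → ∫ v in (0:ℝ)..T, κ x v = ∫ v in (0:ℝ)..T, κ' x v :=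
      fun hx => intervalIntegral.integral_congr fun v hv =>
        heq _ v hx (uIcc_of_le hT.le ▸ hv).1
    rw [intCov_congr heq (hnonneg hε ht) hT.le, intCov_congr heq hTn.le hT.le,
      setIntegral_congr_fun (g := fun u =>
        |(∫ v in (0:ℝ)..T, κ' (Tn + ε * u) v) - (∫ v in (0:ℝ)..T, κ Tn v) - ε ^ α * gtilde u T|)
        measurableSet_Icc fun u hu => by simp only [hinner (hnonneg hε hu)]]
    exact intCov_difference_remainder_le hκ' (hgtilde T hT) Tn _ T hε
      (Real.rpow_pos_of_pos hε α) ht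
end
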